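/- Let η : ℝ × ℝ³ → ℝ³ be a C² map such that for every (t,x) the spatial Jacobian ∇η(t,x) (entries ∂_l η_i) is invertible, let v := ∂_t η, A := (∇η)⁻¹, and define ∂_i^η g := ∑_k A_{ki} ∂_k g (spatial derivatives). Then for every C² function f : ℝ × ℝ³ → ℝ, every index i, and every (t,x): ∂_t(∂_i^η f)(t,x) − ∂_i^η(∂_t f)(t,x) = −∑_{l=1}^{3} (∂_i^η v_l)(t,x) · (∂_l^η f)(t,x). -/

import Mathlib

open scoped Matrix BigOperators

/-- Spatial partial derivative `∂_l f` of a scalar function on `ℝ × ℝ³`. -/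
noncomputable def pdx (f : ℝ × (Fin 3 → ℝ) → ℝ) (l : Fin 3) (p : ℝ × (Fin 3 → ℝ)) : ℝ :=
  fderiv ℝ (fun y => f (p.1, y)) p.2 (Pi.single l 1)

/-- Time derivative `∂_t f` of a scalar function on `ℝ × ℝ³`. -/
noncomputable def pdt (f : ℝ × (Fin 3 → ℝ) → ℝ) (p : ℝ × (Fin 3 → ℝ)) : ℝ :=
  deriv (fun s => f (s, p.2)) p.1

/-- Spatial Jacobian matrix `∇η` with entries `(∇η)_{il} = ∂_l η_i`. -/
noncomputable def Jac (η : ℝ × (Fin 3 → ℝ) → Fin 3 → ℝ) (p : ℝ × (Fin 3 → ℝ)) :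
    Matrix (Fin 3) (Fin 3) ℝ :=
  Matrix.of fun i l => pdx (fun q => η q i) l p

/-- Transformed derivative `∂_i^η g = ∑_k A_{ki} ∂_k g`, where `A = (∇η)⁻¹`. -/
noncomputable def Deta (η : ℝ × (Fin 3 → ℝ) → Fin 3 → ℝ) (f : ℝ × (Fin 3 → ℝ) → ℝ)
    (i : Fin 3) (p : ℝ × (Fin 3 → ℝ)) : ℝ :=
  ∑ k, (Jac η p)⁻¹ k i * pdx f k p

/-!
Read `∂^η f` as the row vector `∇f A` with `A = (∇η)⁻¹`. Mixed partials commute, so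
`∂_t ∇f = ∇(∂_t f)` and `∂_t ∇η = ∇v`; hence `∂_t A = -A (∇v) A`, and the product rule leaves the
commutator `-∇f A (∇v) A`. Its `i`-th entry pairs `∇f A`, the vector of the `∂_l^η f`, with the
`i`-th column of `(∇v) A`, whose entries are the `∂_i^η v_l`.
-/

open scoped Topology

section RingInverse

variable {𝕜 R : Type*} [NontriviallyNormedField 𝕜] [NormedRing R] [HasSummableGeomSeries R]
  [NormedAlgebra 𝕜 R]

theorem hasDerivAt_ringInverse_comp {c : 𝕜 → R} {c' : R} {t : 𝕜} (hc : HasDerivAt c c' t)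
    (hu : IsUnit (c t)) :
    HasDerivAt (fun s => Ring.inverse (c s))
      (-(Ring.inverse (c t) * c' * Ring.inverse (c t))) t := by
  obtain ⟨u, hu⟩ := hu
  have hinv := hasFDerivAt_ringInverse (𝕜 := 𝕜) u
  rw [hu] at hinv
  simpa [← hu, Function.comp_def] using hinv.comp_hasDerivAt t hc

end RingInverse

section Matrix

variable {𝕜 m n : Type*} [NontriviallyNormedField 𝕜]

theorem hasDerivAt_matrix [Finite m] [Finite n] {F : Type*} [NormedAddCommGroup F]
    [NormedSpace 𝕜 F] {M : 𝕜 → Matrix m n F} {M' : Matrix m n F} {t : 𝕜} :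
    HasDerivAt M M' t ↔ ∀ i j, HasDerivAt (fun s => M s i j) (M' i j) t := by
  cases nonempty_fintype m
  cases nonempty_fintype n
  exact hasDerivAt_pi.trans (forall_congr' fun _ => hasDerivAt_pi)

theorem hasDerivAt_matrix_inv [CompleteSpace 𝕜] [Fintype n] [DecidableEq n]
    {M : 𝕜 → Matrix n n 𝕜} {M' : Matrix n n 𝕜} {t : 𝕜} (hM : HasDerivAt M M' t)
    (hu : IsUnit (M t)) :
    HasDerivAt (fun s => (M s)⁻¹) (-((M t)⁻¹ * M' * (M t)⁻¹)) t := by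
  -- The statement only involves the product topology; any submultiplicative norm inducing it works.
  let : NormedRing (Matrix n n 𝕜) := Matrix.linftyOpNormedRing
  let : NormedAlgebra 𝕜 (Matrix n n 𝕜) := Matrix.linftyOpNormedAlgebra
  have : @CompleteSpace (Matrix n n 𝕜) PseudoMetricSpace.toUniformSpace :=
    inferInstanceAs (CompleteSpace (n → n → 𝕜))
  simp only [Matrix.nonsing_inv_eq_ringInverse]
  exact hasDerivAt_ringInverse_comp hM hu

end Matrix

section PartialDerivatives

variable {𝕜 E F : Type*} [NontriviallyNormedField 𝕜] [NormedAddCommGroup E] [NormedSpace 𝕜 E]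
  [NormedAddCommGroup F] [NormedSpace 𝕜 F] {g : 𝕜 × E → F} {p : 𝕜 × E}

theorem hasDerivAt_comp_prodMk_left (hg : DifferentiableAt 𝕜 g p) :
    HasDerivAt (fun s => g (s, p.2)) (fderiv 𝕜 g p (1, 0)) p.1 :=
  hg.hasFDerivAt.comp_hasDerivAt p.1 ((hasDerivAt_id p.1).prodMk (hasDerivAt_const p.1 p.2))

theorem fderiv_comp_prodMk_right_apply (hg : DifferentiableAt 𝕜 g p) (w : E) :
    fderiv 𝕜 (fun y => g (p.1, y)) p.2 w = fderiv 𝕜 g p (0, w) := by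
  have hslice : HasFDerivAt (fun y => g (p.1, y)) (fderiv 𝕜 g p ∘L .inr 𝕜 𝕜 E) p.2 :=
    HasFDerivAt.comp (g := g) p.2 hg.hasFDerivAt (hasFDerivAt_prodMk_right p.1 p.2)
  simp [hslice.fderiv]

theorem hasDerivAt_fderiv_comp_prodMk_right {n : WithTop ℕ∞} (hg : ContDiffAt 𝕜 n g p)
    (hn : minSmoothness 𝕜 2 ≤ n) (w : E) :
    HasDerivAt (fun s => fderiv 𝕜 (fun y => g (s, y)) p.2 w)
      (fderiv 𝕜 (fun y => deriv (fun s => g (s, y)) p.1) p.2 w) p.1 := by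
  have hg₂ : ContDiffAt 𝕜 2 g p := hg.of_le (le_minSmoothness.trans hn)
  have hdiff : ∀ᶠ q in 𝓝 p, DifferentiableAt 𝕜 g q :=
    (hg₂.eventually (by simp)).mono fun q hq => hq.differentiableAt (by simp)
  have hfderiv : DifferentiableAt 𝕜 (fderiv 𝕜 g) p :=
    (hg₂.fderiv_right (m := 1) (by norm_num)).differentiableAt (by simp)
  have hdir (u : 𝕜 × E) : DifferentiableAt 𝕜 (fun q => fderiv 𝕜 g q u) p :=
    hfderiv.clm_apply (differentiableAt_const u)
  have hsnd (u u' : 𝕜 × E) :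
      fderiv 𝕜 (fun q => fderiv 𝕜 g q u) p u' = fderiv 𝕜 (fderiv 𝕜 g) p u' u := by
    simp [fderiv_clm_apply hfderiv (differentiableAt_const u)]
  have hspace : (fun s => fderiv 𝕜 (fun y => g (s, y)) p.2 w) =ᶠ[𝓝 p.1]
      fun s => fderiv 𝕜 g (s, p.2) (0, w) :=
    ((Continuous.prodMk_left p.2).tendsto p.1 |>.eventually hdiff).mono
      fun s hs => fderiv_comp_prodMk_right_apply hs w
  have htime : (fun y => deriv (fun s => g (s, y)) p.1) =ᶠ[𝓝 p.2]
      fun y => fderiv 𝕜 g (p.1, y) (1, 0) :=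
    ((Continuous.prodMk_right p.1).tendsto p.2 |>.eventually hdiff).mono
      fun y hy => (hasDerivAt_comp_prodMk_left hy).deriv
  have hmixed : fderiv 𝕜 (fun y => deriv (fun s => g (s, y)) p.1) p.2 w =
      fderiv 𝕜 (fun q => fderiv 𝕜 g q (0, w)) p (1, 0) := by
    rw [htime.fderiv_eq, fderiv_comp_prodMk_right_apply (hdir (1, 0)), hsnd, hsnd,
      (hg.isSymmSndFDerivAt hn).eq]
  rw [hmixed]
  exact (hasDerivAt_comp_prodMk_left (hdir (0, w))).congr_of_eventuallyEq hspace

end PartialDerivatives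

section TransformedDerivative

/-- The Lagrangian velocity `v = ∂_t η` of a flow map `η`, taken componentwise. -/
noncomputable def lagrangianVelocity (η : ℝ × (Fin 3 → ℝ) → Fin 3 → ℝ) (p : ℝ × (Fin 3 → ℝ)) :
    Fin 3 → ℝ :=
  fun l => pdt (fun q => η q l) p

/-- The spatial gradient `∇f`, as a row vector. -/
noncomputable def spatialGrad (f : ℝ × (Fin 3 → ℝ) → ℝ) (p : ℝ × (Fin 3 → ℝ)) : Fin 3 → ℝ :=
  fun k => pdx f k p

variable {η : ℝ × (Fin 3 → ℝ) → Fin 3 → ℝ} {f : ℝ × (Fin 3 → ℝ) → ℝ} {p : ℝ × (Fin 3 → ℝ)}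

theorem hasDerivAt_spatialGrad (hf : ContDiffAt ℝ 2 f p) :
    HasDerivAt (fun s => spatialGrad f (s, p.2)) (spatialGrad (pdt f) p) p.1 :=
  hasDerivAt_pi.2 fun _ => hasDerivAt_fderiv_comp_prodMk_right hf (by simp) _

theorem hasDerivAt_Jac (hη : ContDiffAt ℝ 2 η p) :
    HasDerivAt (fun s => Jac η (s, p.2)) (Jac (lagrangianVelocity η) p) p.1 :=
  hasDerivAt_matrix.2 fun l =>
    hasDerivAt_pi.1 (hasDerivAt_spatialGrad (contDiffAt_pi.1 hη l))

theorem Deta_eq_vecMul (η : ℝ × (Fin 3 → ℝ) → Fin 3 → ℝ) (f : ℝ × (Fin 3 → ℝ) → ℝ) (i : Fin 3)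
    (p : ℝ × (Fin 3 → ℝ)) : Deta η f i p = (spatialGrad f p ᵥ* (Jac η p)⁻¹) i :=
  Finset.sum_congr rfl fun _ _ => mul_comm _ _

theorem Jac_mul_inv_Jac_apply (u η : ℝ × (Fin 3 → ℝ) → Fin 3 → ℝ) (p : ℝ × (Fin 3 → ℝ))
    (l i : Fin 3) : (Jac u p * (Jac η p)⁻¹) l i = Deta η (fun q => u q l) i p :=
  (Deta_eq_vecMul η (fun q => u q l) i p).symm

theorem hasDerivAt_Deta (hη : ContDiffAt ℝ 2 η p) (hinv : IsUnit (Jac η p))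
    (hf : ContDiffAt ℝ 2 f p) (i : Fin 3) :
    HasDerivAt (fun s => Deta η f i (s, p.2))
      (Deta η (pdt f) i p -
        ∑ l, Deta η (fun q => lagrangianVelocity η q l) i p * Deta η f l p) p.1 := by
  set A := (Jac η p)⁻¹ with hA
  set V := Jac (lagrangianVelocity η) p with hV
  have hinvJac : HasDerivAt (fun s => (Jac η (s, p.2))⁻¹) (-(A * V * A)) p.1 :=
    hasDerivAt_matrix_inv (hasDerivAt_Jac hη) hinv
  have hgrad := hasDerivAt_pi.1 (hasDerivAt_spatialGrad hf)
  have hproduct : HasDerivAt (fun s => Deta η f i (s, p.2))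
      ((spatialGrad (pdt f) p ᵥ* A) i + (spatialGrad f p ᵥ* -(A * V * A)) i) p.1 := by
    simp only [Deta_eq_vecMul, Matrix.vecMul, dotProduct, ← Finset.sum_add_distrib]
    exact HasDerivAt.fun_sum fun k _ => (hgrad k).mul (hasDerivAt_matrix.1 hinvJac k i)
  have hcorrection : (spatialGrad f p ᵥ* (A * V * A)) i =
      ∑ l, Deta η (fun q => lagrangianVelocity η q l) i p * Deta η f l p :=
    calc (spatialGrad f p ᵥ* (A * V * A)) i
        = ((spatialGrad f p ᵥ* A) ᵥ* (V * A)) i := by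
          rw [Matrix.vecMul_vecMul, Matrix.mul_assoc]
      _ = ∑ l, (V * A) l i * (spatialGrad f p ᵥ* A) l :=
          dotProduct_comm _ _
      _ = ∑ l, Deta η (fun q => lagrangianVelocity η q l) i p * Deta η f l p := by
          simp only [hA, hV, Jac_mul_inv_Jac_apply, Deta_eq_vecMul η f]
  rwa [Matrix.vecMul_neg, Pi.neg_apply, hcorrection, ← Deta_eq_vecMul, ← sub_eq_add_neg]
    at hproduct

end TransformedDerivative

theorem commutator_time_Deta_general
    {η : ℝ × (Fin 3 → ℝ) → Fin 3 → ℝ} {f : ℝ × (Fin 3 → ℝ) → ℝ} {p : ℝ × (Fin 3 → ℝ)}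
    (hη : ContDiffAt ℝ 2 η p) (hinv : IsUnit (Jac η p)) (hf : ContDiffAt ℝ 2 f p) (i : Fin 3) :
    pdt (Deta η f i) p - Deta η (pdt f) i p
      = -∑ l, Deta η (fun q => lagrangianVelocity η q l) i p * Deta η f l p := by
  rw [pdt, (hasDerivAt_Deta hη hinv hf i).deriv, sub_sub_cancel_left]

/-- First commutator identity of Lemma 2.1:
`[∂_t, ∂_i^η] f = −(∂_i^η v_l) ∂_l^η f` (summation over `l`), where `v = ∂_t η`. -/
theorem commutator_time_Deta
    (η : ℝ × (Fin 3 → ℝ) → Fin 3 → ℝ) (hη : ContDiff ℝ 2 η)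
    (hinv : ∀ p, IsUnit (Jac η p))
    (f : ℝ × (Fin 3 → ℝ) → ℝ) (hf : ContDiff ℝ 2 f)
    (i : Fin 3) (p : ℝ × (Fin 3 → ℝ)) :
    pdt (fun q => Deta η f i q) p - Deta η (fun q => pdt f q) i p
      = -∑ l, Deta η (fun q => pdt (fun r => η r l) q) i p * Deta η f l p :=
  commutator_time_Deta_general hη.contDiffAt (hinv p) hf.contDiffAt i
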